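/- Let R be a left distributive ring with 0r = 0 for all r ∈ R, and let M be a left distributive left R-module with 0m = 0 for all m ∈ M. Consider M[x] as a left R[x]-module via (∑_i r_i x^i)(∑_j m_j x^j) := ∑_{i,j} (r_i m_j) x^{i+j}. Then M[x] is Noetherian as a left R[x]-module if and only if M is Noetherian and weakly s-unital. -/

import Mathlib

/-- `opSet act S n` is the set `Aⁿ S` of elements
`a₁ (a₂ (⋯ (aₙ s) ⋯))` with `a₁, …, aₙ ∈ A` and `s ∈ S` (and `A⁰ S = S`). -/
def opSet {A B : Type*} (act : A → B → B) (S : Set B) : ℕ → Set B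
  | 0 => S
  | n + 1 => {x | ∃ a : A, ∃ s ∈ opSet act S n, x = act a s}

/-- A subgroup of an abelian group `B` with operators in `A` is *stable* if it
is closed under the action of `A`. -/
def IsStableAdd {A B : Type*} [AddGroup B] (act : A → B → B) (C : AddSubgroup B) : Prop :=
  ∀ a : A, ∀ b ∈ C, act a b ∈ C

/-- The smallest stable subgroup `⟨S⟩` of `B` containing the set `S`. -/
def stableClosureAdd {A B : Type*} [AddGroup B] (act : A → B → B) (S : Set B) : AddSubgroup B :=
  sInf {C : AddSubgroup B | IsStableAdd act C ∧ S ⊆ C}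

/-- `[S]` : the subgroup of `B` generated by the union of the sets `Aⁿ S`, `n ≥ 1`. -/
def bracketAdd {A B : Type*} [AddGroup B] (act : A → B → B) (S : Set B) : AddSubgroup B :=
  AddSubgroup.closure (⋃ n : ℕ, opSet act S (n + 1))

/-- A group `B` with operators in `A` is *stably Noetherian* if every ascending
chain of stable subgroups of `B` eventually stabilizes. -/
def StablyNoetherianAdd {A B : Type*} [AddGroup B] (act : A → B → B) : Prop :=
  ∀ f : ℕ → AddSubgroup B, (∀ n, IsStableAdd act (f n)) → Monotone f →
    ∃ N : ℕ, ∀ n : ℕ, N ≤ n → f n = f N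

/-!
The forward direction tests Noetherianity of `M[x]` on submodules cut out coefficientwise. Constant
families embed the submodules of `M` into those of `M[x]`. If `B ≤ C` and `R` carries `C` into `B`,
then `C + C x + ⋯ + C x ^ (k - 1) + B x ^ k + B x ^ (k + 1) + ⋯` is an ascending chain of
submodules, so `C = B`. Given `m`, take for `B` the subgroup generated by the products
`r₁ (⋯ (rₙ m))` with `n ≥ 1`, and for `C` the elements that `R` carries into `B`, among them `m`.

The backward direction is Hilbert's basis argument. The leading coefficients of the polynomials of
degree at most `n` in a submodule `P` form a submodule of `M`. Multiplication by `x` is not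
available, but multiplication by `r x` is, so weak s-unitality makes this submodule increase with
`n`. An inclusion of submodules is strict only if it is strict on some leading coefficients, and
monotone sequences in a partial order satisfying the ascending chain condition again satisfy it.
-/

instance wellFoundedGT_natOrderHom {α : Type*} [PartialOrder α] [WellFoundedGT α] :
    WellFoundedGT (ℕ →o α) := by
  rw [wellFoundedGT_iff_monotone_chain_condition]
  intro f
  have mono {k l m n : ℕ} (hkl : k ≤ l) (hmn : m ≤ n) : f k m ≤ f l n :=
    (f.mono hkl m).trans ((f l).mono hmn)
  obtain ⟨D, hD⟩ := WellFoundedGT.monotone_chain_condition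
    (⟨fun k => f k k, fun _ _ h => mono h h⟩ : ℕ →o α)
  choose K hK using fun n => WellFoundedGT.monotone_chain_condition
    (⟨fun k => f k n, fun _ _ h => mono h le_rfl⟩ : ℕ →o α)
  let N := max D ((Finset.range D).sup K)
  refine ⟨N, fun k hk => le_antisymm (f.mono hk) fun n => ?_⟩
  rcases lt_or_ge n D with hn | hn
  · have hKN : K n ≤ N := le_max_of_le_right (Finset.le_sup (Finset.mem_range.2 hn))
    exact ((hK n k (hKN.trans hk)).symm.trans (hK n N hKN)).le
  · calc f k n ≤ f (max k n) (max k n) := mono (le_max_left _ _) (le_max_right _ _)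
      _ = f D D := (hD _ (hn.trans (le_max_right _ _))).symm
      _ ≤ f N n := mono (le_max_left _ _) hn

section Operators

variable {A B : Type*} [AddGroup B] {act : A → B → B}

/-- The stable subgroups of a group with operators, ordered by inclusion; for the action of a ring
on a module these are the submodules. -/
abbrev StableAddSubgroup (act : A → B → B) : Type _ :=
  {C : AddSubgroup B // IsStableAdd act C}

theorem stablyNoetherianAdd_iff_wellFoundedGT :
    StablyNoetherianAdd act ↔ WellFoundedGT (StableAddSubgroup act) := by
  rw [wellFoundedGT_iff_monotone_chain_condition]
  constructor
  · intro h f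
    obtain ⟨N, hN⟩ := h (fun n => f n) (fun n => (f n).2) f.mono
    exact ⟨N, fun n hn => Subtype.ext (hN n hn).symm⟩
  · intro h f hf hmono
    obtain ⟨N, hN⟩ := h ⟨fun n => ⟨f n, hf n⟩, hmono⟩
    exact ⟨N, fun n hn => congrArg Subtype.val (hN n hn).symm⟩

theorem opSet_subset {C : AddSubgroup B} (hC : IsStableAdd act C) {S : Set B} (hS : S ⊆ C) (n : ℕ) :
    opSet act S n ⊆ C := by
  induction n with
  | zero => exact hS
  | succ n ih =>
    rintro _ ⟨a, s, hs, rfl⟩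
    exact hC a s (ih hs)

theorem bracketAdd_le {C D : AddSubgroup B} (hC : IsStableAdd act C)
    (hCD : ∀ a, ∀ c ∈ C, act a c ∈ D) {S : Set B} (hS : S ⊆ C) : bracketAdd act S ≤ D := by
  refine (AddSubgroup.closure_le D).2 (Set.iUnion_subset fun n => ?_)
  rintro _ ⟨a, s, hs, rfl⟩
  exact hCD a s (opSet_subset hC hS n hs)

theorem act_mem_bracketAdd {S : Set B} (a : A) {s : B} (hs : s ∈ S) :
    act a s ∈ bracketAdd act S :=
  AddSubgroup.subset_closure (Set.mem_iUnion.2 ⟨0, a, s, hs, rfl⟩)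

theorem isStableAdd_bracketAdd (act_add : ∀ a b c, act a (b + c) = act a b + act a c) (S : Set B) :
    IsStableAdd act (bracketAdd act S) := by
  intro a
  suffices bracketAdd act S ≤ (bracketAdd act S).comap (AddMonoidHom.mk' (act a) (act_add a)) from
    fun b hb => this hb
  refine (AddSubgroup.closure_le _).2 (Set.iUnion_subset fun n b hb => ?_)
  exact AddSubgroup.subset_closure (Set.mem_iUnion.2 ⟨n + 1, a, b, hb, rfl⟩)

end Operators

section CoeffSubgroup

variable {ι M : Type*} [AddGroup M] {S T : ι → AddSubgroup M}

/-- The subgroup of those finitely supported functions (for `ι = ℕ`, polynomials) whose `i`-th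
coefficient lies in `S i` for every `i`. -/
noncomputable def coeffSubgroup (S : ι → AddSubgroup M) : AddSubgroup (ι →₀ M) :=
  ⨅ i, (S i).comap (Finsupp.applyAddHom i)

theorem mem_coeffSubgroup {μ : ι →₀ M} : μ ∈ coeffSubgroup S ↔ ∀ i, μ i ∈ S i := by
  simp only [coeffSubgroup, AddSubgroup.mem_iInf, AddSubgroup.mem_comap, Finsupp.applyAddHom_apply]

theorem single_mem_coeffSubgroup {i : ι} {m : M} :
    Finsupp.single i m ∈ coeffSubgroup S ↔ m ∈ S i := by
  classical
  rw [mem_coeffSubgroup]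
  refine ⟨fun h => by simpa using h i, fun h j => ?_⟩
  rw [Finsupp.single_apply]
  split_ifs with hij
  · exact hij ▸ h
  · exact (S j).zero_mem

theorem coeffSubgroup_le_iff : coeffSubgroup S ≤ coeffSubgroup T ↔ ∀ i, S i ≤ T i :=
  ⟨fun h _ _ hm => single_mem_coeffSubgroup.1 (h (single_mem_coeffSubgroup.2 hm)),
    fun h _ hμ => mem_coeffSubgroup.2 fun i => h i (mem_coeffSubgroup.1 hμ i)⟩

end CoeffSubgroup

section LeadingCoeffs

variable {M : Type*} [AddGroup M] {P Q : AddSubgroup (ℕ →₀ M)}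

/-- The coefficients of `x ^ n` in the polynomials of degree at most `n` belonging to `P`, that is,
the leading coefficients in degree `n` together with `0`. -/
noncomputable def leadingCoeffs (P : AddSubgroup (ℕ →₀ M)) (n : ℕ) : AddSubgroup M :=
  (P ⊓ ⨅ j > n, (Finsupp.applyAddHom j).ker).map (Finsupp.applyAddHom n)

theorem mem_leadingCoeffs {n : ℕ} {m : M} :
    m ∈ leadingCoeffs P n ↔ ∃ μ ∈ P, (∀ j > n, μ j = 0) ∧ μ n = m := by
  simp only [leadingCoeffs, AddSubgroup.mem_map, AddSubgroup.mem_inf, AddSubgroup.mem_iInf,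
    AddMonoidHom.mem_ker, Finsupp.applyAddHom_apply, and_assoc]

theorem leadingCoeffs_mono (hPQ : P ≤ Q) (n : ℕ) : leadingCoeffs P n ≤ leadingCoeffs Q n :=
  AddSubgroup.map_mono (inf_le_inf_right _ hPQ)

theorem le_of_leadingCoeffs_le (hPQ : P ≤ Q) (hlead : ∀ n, leadingCoeffs Q n ≤ leadingCoeffs P n) :
    Q ≤ P := by
  have mem_of_degree_lt (n : ℕ) : ∀ μ ∈ Q, (∀ j ≥ n, μ j = 0) → μ ∈ P := by
    induction n with
    | zero =>
      intro μ _ hdeg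
      obtain rfl : μ = 0 := Finsupp.ext fun j => hdeg j j.zero_le
      exact P.zero_mem
    | succ n ih =>
      intro μ hμ hdeg
      obtain ⟨ν, hν, hνdeg, hνn⟩ :=
        mem_leadingCoeffs.1 (hlead n (mem_leadingCoeffs.2 ⟨μ, hμ, hdeg, rfl⟩))
      have hsub : μ - ν ∈ P := by
        refine ih _ (Q.sub_mem hμ (hPQ hν)) fun j hj => ?_
        rw [Finsupp.sub_apply, sub_eq_zero]
        rcases hj.eq_or_lt with rfl | hj
        · exact hνn.symm
        · rw [hνdeg j hj, hdeg j hj]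
      simpa only [sub_add_cancel] using P.add_mem hsub hν
  intro μ hμ
  obtain ⟨n, hn⟩ := μ.support.exists_nat_subset_range
  refine mem_of_degree_lt n μ hμ fun j hj => Finsupp.notMem_support_iff.1 fun hjμ => ?_
  exact hj.not_gt (Finset.mem_range.1 (hn hjμ))

end LeadingCoeffs

section PolyAct

variable {R M : Type*} [Zero R] [AddCommGroup M] {act : R → M → M}

/-- The action of polynomials over `R` on polynomials over `M` extending `act`, with polynomials
encoded as finitely supported coefficient functions. -/
noncomputable def polyAct (act : R → M → M) (α : ℕ →₀ R) (μ : ℕ →₀ M) : ℕ →₀ M :=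
  α.sum fun i r => μ.sum fun j m => Finsupp.single (i + j) (act r m)

theorem polyAct_single_apply (act_zero : ∀ r, act r 0 = 0) (zero_act : ∀ m, act 0 m = 0)
    (i j : ℕ) (r : R) (μ : ℕ →₀ M) : polyAct act (Finsupp.single i r) μ (i + j) = act r (μ j) := by
  rw [polyAct, Finsupp.sum_single_index (by simp [zero_act]), Finsupp.sum_apply, Finsupp.sum,
    Finset.sum_eq_single j]
  · exact Finsupp.single_eq_same
  · intro k _ hkj
    exact Finsupp.single_eq_of_ne (by omega)
  · intro hj
    rw [Finsupp.notMem_support_iff.1 hj, act_zero, Finsupp.single_zero, Finsupp.zero_apply]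

theorem isStableAdd_coeffSubgroup {S : ℕ → AddSubgroup M}
    (hS : ∀ i j r, ∀ m ∈ S j, act r m ∈ S (i + j)) :
    IsStableAdd (polyAct act) (coeffSubgroup S) := fun _ _ hμ =>
  AddSubgroup.sum_mem _ fun _ _ => AddSubgroup.sum_mem _ fun _ _ =>
    single_mem_coeffSubgroup.2 (hS _ _ _ _ (mem_coeffSubgroup.1 hμ _))

theorem StablyNoetherianAdd.of_polyAct (h : StablyNoetherianAdd (polyAct act)) :
    StablyNoetherianAdd act := by
  rw [stablyNoetherianAdd_iff_wellFoundedGT] at h ⊢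
  let extend (C : StableAddSubgroup act) : StableAddSubgroup (polyAct act) :=
    ⟨coeffSubgroup fun _ => C, isStableAdd_coeffSubgroup fun _ _ => C.2⟩
  have extend_strictMono : StrictMono extend :=
    strictMono_of_le_iff_le fun _ _ => ((coeffSubgroup_le_iff).trans (forall_const ℕ)).symm
  exact extend_strictMono.wellFoundedGT

theorem StablyNoetherianAdd.le_of_act_mem (h : StablyNoetherianAdd (polyAct act))
    {B C : AddSubgroup M} (hBC : B ≤ C) (hact : ∀ r, ∀ c ∈ C, act r c ∈ B) : C ≤ B := by
  let S (k j : ℕ) : AddSubgroup M := if j < k then C else B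
  have le_S (k j : ℕ) : B ≤ S k j := by
    unfold S
    split_ifs
    exacts [hBC, le_rfl]
  have S_le (k j : ℕ) : S k j ≤ C := by
    unfold S
    split_ifs
    exacts [le_rfl, hBC]
  have S_mono {k l : ℕ} (hkl : k ≤ l) (j : ℕ) : S k j ≤ S l j := by
    by_cases hj : j < k
    · exact (S_le k j).trans_eq (if_pos (hj.trans_le hkl)).symm
    · exact (if_neg hj).trans_le (le_S l j)
  obtain ⟨N, hN⟩ := h (fun k => coeffSubgroup (S k))
    (fun k => isStableAdd_coeffSubgroup fun i j r m hm => le_S k (i + j) (hact r m (S_le k j hm)))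
    (fun _ _ hkl => coeffSubgroup_le_iff.2 (S_mono hkl))
  have hSN : S (N + 1) N ≤ S N N := coeffSubgroup_le_iff.1 (hN (N + 1) N.le_succ).le N
  simpa [S] using hSN

theorem StablyNoetherianAdd.mem_bracketAdd (h : StablyNoetherianAdd (polyAct act))
    (act_add : ∀ r m n, act r (m + n) = act r m + act r n) (m : M) :
    m ∈ bracketAdd act {m} := by
  let B := bracketAdd act {m}
  let C : AddSubgroup M := ⨅ r, B.comap (AddMonoidHom.mk' (act r) (act_add r))
  have mem_C {c : M} : c ∈ C ↔ ∀ r, act r c ∈ B := AddSubgroup.mem_iInf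
  have hBC : B ≤ C := fun b hb => mem_C.2 fun r => isStableAdd_bracketAdd act_add {m} r b hb
  have hmC : m ∈ C := mem_C.2 fun r => act_mem_bracketAdd r rfl
  exact h.le_of_act_mem hBC (fun r c hc => mem_C.1 hc r) hmC

theorem act_mem_leadingCoeffs (act_zero : ∀ r, act r 0 = 0) (zero_act : ∀ m, act 0 m = 0)
    {P : AddSubgroup (ℕ →₀ M)} (hP : IsStableAdd (polyAct act) P) (i : ℕ) {n : ℕ} (r : R) {m : M}
    (hm : m ∈ leadingCoeffs P n) : act r m ∈ leadingCoeffs P (i + n) := by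
  obtain ⟨μ, hμ, hdeg, rfl⟩ := mem_leadingCoeffs.1 hm
  refine mem_leadingCoeffs.2 ⟨polyAct act (Finsupp.single i r) μ, hP _ μ hμ, fun j hj => ?_,
    polyAct_single_apply act_zero zero_act i n r μ⟩
  obtain ⟨k, rfl⟩ := Nat.exists_eq_add_of_le (show i ≤ j by omega)
  rw [polyAct_single_apply act_zero zero_act, hdeg k (by omega), act_zero]

theorem isStableAdd_leadingCoeffs (act_zero : ∀ r, act r 0 = 0) (zero_act : ∀ m, act 0 m = 0)
    {P : AddSubgroup (ℕ →₀ M)} (hP : IsStableAdd (polyAct act) P) (n : ℕ) :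
    IsStableAdd act (leadingCoeffs P n) := fun r _ hm =>
  n.zero_add ▸ act_mem_leadingCoeffs act_zero zero_act hP 0 r hm

theorem monotone_leadingCoeffs (act_zero : ∀ r, act r 0 = 0) (zero_act : ∀ m, act 0 m = 0)
    (mem_bracket : ∀ m, m ∈ bracketAdd act {m}) {P : AddSubgroup (ℕ →₀ M)}
    (hP : IsStableAdd (polyAct act) P) : Monotone (leadingCoeffs P) := by
  refine monotone_nat_of_le_succ fun n m hm => ?_
  suffices bracketAdd act {m} ≤ leadingCoeffs P (n + 1) from this (mem_bracket m)
  refine bracketAdd_le (isStableAdd_leadingCoeffs act_zero zero_act hP n) (fun r c hc => ?_)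
    (Set.singleton_subset_iff.2 hm)
  exact n.add_comm 1 ▸ act_mem_leadingCoeffs act_zero zero_act hP 1 r hc

theorem StablyNoetherianAdd.polyAct_of_mem_bracketAdd (h : StablyNoetherianAdd act)
    (act_zero : ∀ r, act r 0 = 0) (zero_act : ∀ m, act 0 m = 0)
    (mem_bracket : ∀ m, m ∈ bracketAdd act {m}) :
    StablyNoetherianAdd (polyAct act) := by
  rw [stablyNoetherianAdd_iff_wellFoundedGT] at h ⊢
  let lead (P : StableAddSubgroup (polyAct act)) : ℕ →o StableAddSubgroup act :=
    ⟨fun n => ⟨leadingCoeffs P n, isStableAdd_leadingCoeffs act_zero zero_act P.2 n⟩,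
      monotone_leadingCoeffs act_zero zero_act mem_bracket P.2⟩
  have lead_strictMono : StrictMono lead := fun P Q hPQ =>
    ⟨leadingCoeffs_mono hPQ.le, fun hQP => hPQ.not_ge (le_of_leadingCoeffs_le hPQ.le hQP)⟩
  exact lead_strictMono.wellFoundedGT

end PolyAct

theorem stmt18_general {R M : Type*} [Zero R] [AddCommGroup M] {act : R → M → M}
    (act_add : ∀ r m n, act r (m + n) = act r m + act r n)
    (zero_act : ∀ m, act 0 m = 0) :
    StablyNoetherianAdd (polyAct act) ↔
      (StablyNoetherianAdd act ∧ ∀ m, m ∈ bracketAdd act {m}) := by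
  have act_zero (r : R) : act r 0 = 0 := map_zero (AddMonoidHom.mk' (act r) (act_add r))
  exact ⟨fun h => ⟨h.of_polyAct, h.mem_bracketAdd act_add⟩,
    fun ⟨h, mem_bracket⟩ => h.polyAct_of_mem_bracketAdd act_zero zero_act mem_bracket⟩

/-- Let `R` be a left distributive ring (with `0r = 0`) and `M` a
left distributive left `R`-module (with `0m = 0`).  Consider `M[x]` as a left
`R[x]`-module via `(∑ rᵢ xⁱ)(∑ mⱼ xʲ) = ∑ (rᵢ mⱼ) x^{i+j}`.  Then `M[x]` is
Noetherian as a left `R[x]`-module if and only if `M` is Noetherian and weakly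
s-unital (every `m ∈ M` lies in the additive subgroup generated by the iterated
products `r₁(r₂(⋯(rₙ m)⋯))`, `n ≥ 1`).
Noetherianity is expressed via `StablyNoetherianAdd`, whose stable subgroups
are exactly the submodules, and weak s-unitality via `bracketAdd`. -/
theorem stmt18 {R M : Type*} [AddCommGroup R] [AddCommGroup M]
    (mul : R → R → R) (smul : R → M → M)
    (hmul_ld : ∀ r s t : R, mul r (s + t) = mul r s + mul r t)
    (h0r : ∀ r : R, mul 0 r = 0)
    (hsmul_ld : ∀ (r : R) (m n : M), smul r (m + n) = smul r m + smul r n)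
    (h0m : ∀ m : M, smul 0 m = 0) :
    StablyNoetherianAdd (fun (α : ℕ →₀ R) (μ : ℕ →₀ M) =>
        α.sum fun i r => μ.sum fun j m => Finsupp.single (i + j) (smul r m)) ↔
      (StablyNoetherianAdd smul ∧ ∀ m : M, m ∈ bracketAdd smul {m}) :=
  stmt18_general hsmul_ld h0m
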